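/- Let q be a prime power and d a positive integer with d ≡ 0 (mod 4) and q+1 ≡ d/2 (mod d). Let ξ be a primitive element of F_{q²}. Let a, b, c ∈ F_{q²} and j ∈ ℤ satisfy a·b ≠ 0, b = ξ^{(q−1)·j·(d/2)}·a^q and a·c^q = b^q·c, and assume b·u ≠ a·v. Let u, v ∈ F_{q²} and the positive integer r satisfy either (u^{q+1} = v^{q+1} and gcd(r, (q²−1)/d) = 1) or (u^{q+1} ≠ v^{q+1} and r = 1). Let e₀, e₁ ∈ F_{q²} and define f(x) = (a·x^q + b·x + c)^r · (e₀ + e₁·(a·x^q + b·x + c)^{(q²−1)/d}) + u·x^q + v·x. Then f is a permutation polynomial of F_{q²} if and only if [(B·e₀ + A^{1−r}·B^{q·r}·e₀^q + u^{q+1} − v^{q+1})² − (B·e₁ + A^{1−r}·B^{q·r}·e₁^q)²]^{(q²−1)/d} = (−1)^{r+1}. -/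

import Mathlib

section Auxiliary

variable {F : Type*} [Field F]

lemma exists_ringHom_eq_pow [Fintype F] {q : ℕ} (hq : IsPrimePow q)
    (hF : Fintype.card F = q ^ 2) :
    ∃ σ : F →+* F, (∀ x, σ x = x ^ q) ∧ ∀ x, σ (σ x) = x := by
  obtain ⟨p, k, hp, hk, rfl⟩ := hq
  have hp' : p.Prime := hp.nat_prime
  have : Fact p.Prime := ⟨hp'⟩
  have : CharP F p := by
    refine charP_of_card_eq_prime_pow (f := k * 2) ?_
    rw [hF, pow_mul]
  refine ⟨iterateFrobenius F p k, fun x => iterateFrobenius_def p k x, fun x => ?_⟩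
  rw [iterateFrobenius_def, iterateFrobenius_def, ← pow_mul, ← sq, ← hF, FiniteField.pow_card]

/-- If `σ` is a nontrivial involution, `x ↦ a * σ x + b * x` maps onto the `ρ`-eigenspace of `σ`
as soon as `σ` exchanges `a` and `b` up to the factor `ρ`. -/
lemma exists_mul_map_add_mul_eq {σ : F →+* F} (hne : ∃ x, σ x ≠ x)
    (hσ : ∀ x, σ (σ x) = x) {a b ρ : F} (ha : a ≠ 0) (hρ : ρ ≠ 0) (hab : σ a = ρ * b)
    (hba : σ b = ρ * a) {y : F} (hy : σ y = ρ * y) : ∃ x, a * σ x + b * x = y := by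
  have hx : ∃ x, a * σ x + b * x ≠ 0 := by
    by_contra! h
    obtain ⟨x, hx⟩ := hne
    have h1 := h 1
    rw [map_one] at h1
    exact hx (mul_left_cancel₀ ha (by linear_combination h x - x * h1))
  obtain ⟨x, hx⟩ := hx
  set z := a * σ x + b * x with hz
  have hσz : σ z = ρ * z := by
    rw [hz, map_add, map_mul, map_mul, hσ, hab, hba]
    ring
  refine ⟨y / z * x, ?_⟩
  have ht : σ (y / z) = y / z := by
    rw [map_div₀, hy, hσz, mul_div_mul_left _ _ hρ]
  rw [map_mul, ht]
  calc _ = y / z * z := by rw [hz]; ring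
    _ = y := div_mul_cancel₀ y hx

lemma eq_of_pow_eq_pow_of_gcd_eq_one {x y : F} (hy : y ≠ 0) {r s : ℕ} (h : Nat.gcd r s = 1)
    (hr : x ^ r = y ^ r) (hs : x ^ s = y ^ s) : x = y := by
  have h1 : (x / y) ^ r = 1 := by rw [div_pow, hr, div_self (pow_ne_zero r hy)]
  have h2 : (x / y) ^ s = 1 := by rw [div_pow, hs, div_self (pow_ne_zero s hy)]
  have h3 : orderOf (x / y) ∣ 1 :=
    h ▸ Nat.dvd_gcd (orderOf_dvd_of_pow_eq_one h1) (orderOf_dvd_of_pow_eq_one h2)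
  exact (div_eq_one_iff_eq hy).1 (orderOf_eq_one_iff.1 (Nat.dvd_one.1 h3))

lemma injOn_pow_mul_add_mul_pow {S : Set F} {r s : ℕ} (hr : 0 < r) (hs : 0 < s)
    (hrs : Nat.gcd r s = 1) (h2 : (1 : F) ≠ -1)
    (hS : ∀ y ∈ S, y ≠ 0 → y ^ s = 1 ∨ y ^ s = -1) {P E : F}
    (hPE : P - E ≠ 0 → (P - E) ^ s = 1 ∨ (P - E) ^ s = -1)
    (h : (P ^ 2 - E ^ 2) ^ s = (-1) ^ (r + 1)) :
    S.InjOn fun y => y ^ r * (P + E * y ^ s) := by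
  have h' : (P + E) ^ s * (P - E) ^ s = (-1) ^ (r + 1) := by
    rw [← h, ← mul_pow]
    ring
  have hprod : (P + E) ^ s * (P - E) ^ s ≠ 0 := by
    rw [h']
    exact pow_ne_zero _ (neg_ne_zero.2 one_ne_zero)
  have hα : P + E ≠ 0 := (pow_ne_zero_iff hs.ne').1 (left_ne_zero_of_mul hprod)
  have hβ : P - E ≠ 0 := (pow_ne_zero_iff hs.ne').1 (right_ne_zero_of_mul hprod)
  have hne : (P + E) ^ s ≠ (-1) ^ r * (P - E) ^ s := by
    intro h3
    rw [h3, pow_succ, mul_assoc] at h'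
    have h4 := mul_left_cancel₀ (pow_ne_zero r (neg_ne_zero.2 one_ne_zero)) h'
    rcases hPE hβ with h5 | h5 <;> rw [h5] at h4 <;> exact h2 (by linear_combination h4)
  have hfac : ∀ y ∈ S, y ≠ 0 → P + E * y ^ s ≠ 0 := by
    intro y hy hy0
    rcases hS y hy hy0 with h5 | h5 <;> rw [h5]
    · simpa using hα
    · simpa [sub_eq_add_neg] using hβ
  have hopp : ∀ y z : F, y ^ s = 1 → z ^ s = -1 →
      y ^ r * (P + E * y ^ s) ≠ z ^ r * (P + E * z ^ s) := by
    intro y z hy hz h6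
    apply hne
    have h7 := congrArg (· ^ s) h6
    simp only [hy, hz, mul_pow, ← pow_mul, mul_comm r s] at h7
    simp only [pow_mul, hy, hz, one_pow, one_mul, mul_one, mul_neg, ← sub_eq_add_neg] at h7
    exact h7
  intro y hy z hz hyz
  simp only at hyz
  by_cases hy0 : y = 0
  · by_contra hzy
    have hz0 : z ≠ 0 := fun h => hzy (hy0.trans h.symm)
    rw [hy0, zero_pow hr.ne', zero_mul] at hyz
    exact mul_ne_zero (pow_ne_zero r hz0) (hfac z hz hz0) hyz.symm
  by_cases hz0 : z = 0
  · rw [hz0, zero_pow hr.ne', zero_mul] at hyz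
    exact absurd hyz (mul_ne_zero (pow_ne_zero r hy0) (hfac y hy hy0))
  have hsame : y ^ s = z ^ s → y = z := fun h8 => by
    rw [h8] at hyz
    exact eq_of_pow_eq_pow_of_gcd_eq_one hz0 hrs (mul_right_cancel₀ (hfac z hz hz0) hyz) h8
  rcases hS y hy hy0 with h5 | h5 <;> rcases hS z hz hz0 with h6 | h6
  · exact hsame (h5.trans h6.symm)
  · exact absurd hyz (hopp y z h5 h6)
  · exact absurd hyz.symm (hopp z y h6 h5)
  · exact hsame (h5.trans h6.symm)

lemma sq_sub_sq_pow_eq_of_surjOn {S : Set F} {r s : ℕ} (hr : 0 < r) (hs : 0 < s)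
    (h2 : (1 : F) ≠ -1) (hS : ∀ y ∈ S, y ≠ 0 → y ^ s = 1 ∨ y ^ s = -1)
    (hpos : ∃ y ∈ S, y ^ s = 1) (hneg : ∃ y ∈ S, y ^ s = -1) {P E : F}
    (h : S.SurjOn (fun y => y ^ r * (P + E * y ^ s)) S) :
    (P ^ 2 - E ^ 2) ^ s = (-1) ^ (r + 1) := by
  have key : ∀ y ∈ S, (y ^ r * (P + E * y ^ s)) ≠ 0 →
      (y ^ r * (P + E * y ^ s)) ^ s = (P + E) ^ s ∨
      (y ^ r * (P + E * y ^ s)) ^ s = (-1) ^ r * (P - E) ^ s := by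
    intro y hy hy1
    have hy0 : y ≠ 0 := by
      rintro rfl
      exact hy1 (by rw [zero_pow hr.ne', zero_mul])
    rw [mul_pow, ← pow_mul, mul_comm r s, pow_mul]
    rcases hS y hy hy0 with h5 | h5 <;> rw [h5]
    · left; simp
    · right; simp [sub_eq_add_neg]
  have hval : ∀ δ : F, δ ≠ 0 → (∃ y ∈ S, y ^ s = δ) →
      δ = (P + E) ^ s ∨ δ = (-1) ^ r * (P - E) ^ s := by
    rintro δ hδ ⟨z, hz, rfl⟩
    obtain ⟨y, hy, rfl⟩ := h hz
    exact key y hy ((pow_ne_zero_iff hs.ne').1 hδ)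
  have hfin : (P ^ 2 - E ^ 2) ^ s = (P + E) ^ s * (P - E) ^ s := by
    rw [← mul_pow]
    ring
  have hr2 : ((-1 : F) ^ r) * (-1) ^ r = 1 := by rw [← mul_pow]; simp
  have hmul : (P + E) ^ s * ((-1) ^ r * (P - E) ^ s) = -1 := by
    rcases hval 1 one_ne_zero hpos with h5 | h5 <;>
      rcases hval (-1) (neg_ne_zero.2 one_ne_zero) hneg with h6 | h6
    · exact absurd (h5.trans h6.symm) h2
    · rw [← h5, ← h6]; ring
    · rw [← h5, ← h6]; ring
    · exact absurd (h5.trans h6.symm) h2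
  rw [hfin, pow_succ]
  linear_combination (-1) ^ r * hmul - (P + E) ^ s * (P - E) ^ s * hr2

end Auxiliary


theorem stmt_12 {F : Type*} [Field F] [Fintype F]
    (q : ℕ) (hq : IsPrimePow q) (hF : Fintype.card F = q ^ 2)
    (d : ℕ) (hd0 : 0 < d) (hd4 : d % 4 = 0) (hqd : (q + 1) % d = d / 2)
    (ξ : F) (hξ : orderOf ξ = q ^ 2 - 1)
    (a b c u v : F) (j : ℤ) (hab : a * b ≠ 0)
    (hb : b = ξ ^ (((q : ℤ) - 1) * j * ((d / 2 : ℕ) : ℤ)) * a ^ q)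
    (hac : a * c ^ q = b ^ q * c)
    (hA0 : b * u ≠ a * v)
    (r : ℕ) (hr : 0 < r)
    (huvr : (u ^ (q + 1) = v ^ (q + 1) ∧ Nat.gcd r ((q ^ 2 - 1) / d) = 1) ∨
      (u ^ (q + 1) ≠ v ^ (q + 1) ∧ r = 1))
    (e₀ e₁ : F)
    (A B : F) (hA : A = b * u - a * v) (hB : B = a * u ^ q - b * v ^ q)
    (f : F → F)
    (hf : f = fun x => (a * x ^ q + b * x + c) ^ r *
      (e₀ + e₁ * (a * x ^ q + b * x + c) ^ ((q ^ 2 - 1) / d)) + u * x ^ q + v * x) :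
    Function.Bijective f ↔
      ((B * e₀ + A * (A ^ r)⁻¹ * B ^ (q * r) * e₀ ^ q + u ^ (q + 1) - v ^ (q + 1)) ^ 2 -
        (B * e₁ + A * (A ^ r)⁻¹ * B ^ (q * r) * e₁ ^ q) ^ 2) ^ ((q ^ 2 - 1) / d) =
      (-1 : F) ^ (r + 1) := by
  obtain ⟨σ, hσ, hσσ⟩ := exists_ringHom_eq_pow hq hF
  obtain ⟨k, n, t, hk, hn, hd, hqn, hqt⟩ : ∃ k n t : ℕ, 0 < k ∧ 0 < n ∧ d = 4 * k ∧
      q = 2 * n + 1 ∧ q + 1 = 2 * k * (2 * t + 1) := by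
    have hd' : d = 4 * (d / 4) := by omega
    have hdiv := Nat.div_add_mod (q + 1) d
    have hq1 := hq.one_lt
    have h1 : q + 1 = 2 * (d / 4) * (2 * ((q + 1) / d) + 1) := by
      have h2 : d / 2 = 2 * (d / 4) := by omega
      rw [hqd, h2] at hdiv
      calc q + 1 = d * ((q + 1) / d) + 2 * (d / 4) := hdiv.symm
        _ = 4 * (d / 4) * ((q + 1) / d) + 2 * (d / 4) := by rw [← hd']
        _ = _ := by ring
    have h3 : 2 ∣ q + 1 := ⟨_, h1.trans (mul_assoc _ _ _)⟩
    exact ⟨d / 4, (q - 1) / 2, (q + 1) / d, by omega, by omega, hd', by omega, h1⟩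
  set m := 2 * t + 1 with hm
  have hq2 : q ^ 2 - 1 = 4 * k * (n * m) := by
    have : q ^ 2 = 4 * k * (n * m) + 1 := by
      calc q ^ 2 = 2 * n * (q + 1) + 1 := by rw [hqn]; ring
        _ = _ := by rw [hqt]; ring
    omega
  have hs : (q ^ 2 - 1) / d = n * m := by
    rw [hq2, hd]
    exact Nat.mul_div_cancel_left _ (by omega)
  have hd2 : d / 2 = 2 * k := by omega
  have hm0 : 0 < m := by omega
  have hs0 : 0 < n * m := Nat.mul_pos hn hm0
  rw [hs] at huvr hf ⊢
  set s := n * m with hsdef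
  have ha0 : a ≠ 0 := left_ne_zero_of_mul hab
  have hξ1 : ξ ^ (4 * k * s) = 1 := by rw [← hq2, ← hξ, pow_orderOf_eq_one]
  have hξ0 : ξ ≠ 0 := by
    rintro rfl
    rw [zero_pow (by positivity)] at hξ1
    exact zero_ne_one hξ1
  have hξne : ∀ i : ℕ, 0 < i → i < 4 * k * s → ξ ^ i ≠ 1 := fun i hi hi' =>
    pow_ne_one_of_lt_orderOf hi.ne' (by rw [hξ, hq2]; exact hi')
  have hηhalf : ξ ^ (2 * k * s) = -1 := by
    have h1 : ξ ^ (2 * k * s) * ξ ^ (2 * k * s) = 1 := by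
      rw [← pow_add, ← hξ1]; ring_nf
    refine (mul_self_eq_one_iff.1 h1).resolve_left (hξne _ (by positivity) ?_)
    have : 0 < k * s := by positivity
    nlinarith
  have h2 : (1 : F) ≠ -1 := by
    rw [← hηhalf]
    refine (hξne _ (by positivity) ?_).symm
    have : 0 < k * s := by positivity
    nlinarith
  -- `η` lies in the subfield fixed by `σ` and is a nonsquare there
  set η := ξ ^ (q + 1) with hη
  have hηs : η ^ s = -1 := by
    rw [hη, hqt, ← pow_mul, show 2 * k * m * s = 2 * k * s * m by ring, pow_mul, hηhalf]
    exact Odd.neg_one_pow ⟨t, hm⟩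
  have hησ : σ η = η := by
    rw [hσ, hη, ← pow_mul, show (q + 1) * q = (q + 1) + 2 * n * (q + 1) by rw [hqn]; ring, pow_add,
      hqt, show 2 * n * (2 * k * m) = 4 * k * s by rw [hsdef]; ring, hξ1, mul_one]
  have hne : ∃ x, σ x ≠ x := by
    refine ⟨ξ, fun h => hξne (2 * n) (by omega) ?_ ?_⟩
    · have h1 : 2 * n * 2 ≤ 2 * n * (2 * k * m) := Nat.mul_le_mul_left _ (by nlinarith)
      calc 2 * n < 2 * n * 2 := by omega
        _ ≤ _ := h1
        _ = _ := by rw [hsdef]; ring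
    · rw [hσ, hqn, pow_succ] at h
      exact mul_right_cancel₀ hξ0 (by rw [h, one_mul])
  obtain ⟨ζ, hζ, hbζ⟩ : ∃ ζ : F, ζ ^ m = 1 ∧ b = ζ * σ a := by
    refine ⟨_, ?_, by rw [hσ]; exact hb⟩
    rw [← zpow_natCast, ← zpow_mul, hd2,
      show ((q : ℤ) - 1) * j * ((2 * k : ℕ) : ℤ) * (m : ℤ) = ((4 * k * s : ℕ) : ℤ) * j by
        rw [hqn, hsdef]; push_cast; ring, zpow_mul, zpow_natCast, hξ1, one_zpow]
  obtain ⟨ρ, hρ⟩ : ∃ ρ, ρ = σ ζ := ⟨_, rfl⟩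
  have hρm : ρ ^ m = 1 := by rw [hρ, ← map_pow, hζ, map_one]
  have hρ0 : ρ ≠ 0 := by
    rintro rfl
    rw [zero_pow hm0.ne'] at hρm
    exact zero_ne_one hρm
  have hσρ : σ ρ * ρ = 1 := by
    rw [hσ, ← pow_succ, hqt, mul_comm, pow_mul, hρm, one_pow]
  have hσb : σ b = ρ * a := by rw [hbζ, map_mul, hσσ, hρ]
  have hσa : σ a = ρ * b := by
    have := congrArg σ hσb
    rw [hσσ, map_mul] at this
    rw [this]
    linear_combination -σ a * hσρ
  have hσc : σ c = ρ * c := by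
    rw [← hσ, ← hσ, hσb] at hac
    exact mul_left_cancel₀ ha0 (by rw [hac]; ring)
  simp only [pow_succ _ q, ← hσ] at huvr hf hB ⊢
  set N := σ u * u - σ v * v with hN
  have hσN : σ N = N := by simp only [hN, map_sub, map_mul, hσσ]; ring
  have hA0' : A ≠ 0 := by rw [hA]; exact sub_ne_zero.2 hA0
  have hσB : σ B = ρ * A := by
    rw [hB, hA]; simp only [map_sub, map_mul, hσσ, hσb, hσa]; ring
  have hσA : σ A = ρ * B := by
    rw [hB, hA]; simp only [map_sub, map_mul, hσb, hσa]; ring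
  have hgcd : Nat.gcd r s = 1 := by
    rcases huvr with h | h
    · exact h.2
    · rw [h.2, Nat.gcd_one_left]
  have hNr : N = 0 ∨ r = 1 := by
    rcases huvr with h | h
    · exact Or.inl (sub_eq_zero.2 h.1)
    · exact Or.inr h.2
  have hAr : A * (A ^ r)⁻¹ * B ^ (q * r) = A * ρ ^ r := by
    rw [pow_mul, ← hσ, hσB, mul_pow]
    field_simp
  rw [hAr, add_sub_assoc, ← hN]
  obtain ⟨P, hP⟩ : ∃ P, P = B * e₀ + A * ρ ^ r * σ e₀ + N := ⟨_, rfl⟩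
  obtain ⟨E, hE⟩ : ∃ E, E = B * e₁ + A * ρ ^ r * σ e₁ := ⟨_, rfl⟩
  rw [← hP, ← hE]
  have hσρr : σ ρ ^ r * ρ ^ r = 1 := by rw [← mul_pow, hσρ, one_pow]
  have htwist : ∀ e : F, ρ ^ r * σ (B * e + A * ρ ^ r * σ e) = ρ * (B * e + A * ρ ^ r * σ e) := by
    intro e
    simp only [map_add, map_mul, map_pow, hσσ, hσA, hσB]
    linear_combination ρ * B * e * hσρr
  have hσE : ρ ^ r * σ E = ρ * E := by rw [hE]; exact htwist e₁
  have hσP : ρ ^ r * σ P = ρ * P := by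
    have hN' : ρ ^ r * N = ρ * N := by rcases hNr with h | h <;> rw [h] <;> ring
    rw [hP, map_add, mul_add, htwist, hσN, hN']; ring
  have hpm : ∀ z : F, z ^ (2 * s) = 1 → z ^ s = 1 ∨ z ^ s = -1 := fun z hz =>
    mul_self_eq_one_iff.1 (by rw [← pow_add, ← two_mul, hz])
  set S : Set F := {y | σ y = ρ * y} with hSdef
  have hpow : ∀ z τ : F, z ≠ 0 → σ z = τ * z → z ^ (2 * s) = τ ^ m := by
    intro z τ hz hzτ
    rw [hσ, hqn, pow_succ] at hzτ
    rw [hsdef, ← mul_assoc, pow_mul, mul_right_cancel₀ hz hzτ]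
  have hS : ∀ y ∈ S, y ≠ 0 → y ^ s = 1 ∨ y ^ s = -1 := fun y hy hy0 =>
    hpm y ((hpow y ρ hy0 hy).trans hρm)
  have hPE : P - E ≠ 0 → (P - E) ^ s = 1 ∨ (P - E) ^ s = -1 := by
    intro h0
    refine hpm _ ((hpow _ (ρ / ρ ^ r) h0 ?_).trans ?_)
    · have h3 : ρ ^ r * σ (P - E) = ρ * (P - E) := by
        rw [map_sub, mul_sub, hσP, hσE, mul_sub]
      rw [div_mul_eq_mul_div, eq_div_iff (pow_ne_zero r hρ0), ← h3, mul_comm]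
    · rw [div_pow, ← pow_mul, mul_comm r m, pow_mul, hρm, one_pow, div_one]
  have hLS : ∀ x, a * σ x + b * x + c ∈ S := by
    intro x
    simp only [hSdef, Set.mem_ofPred_eq, map_add, map_mul, hσσ, hσa, hσb, hσc]
    ring
  have hrel : ∀ x, A * σ (f x) + B * f x = (a * σ x + b * x + c) ^ r *
      (P + E * (a * σ x + b * x + c) ^ s) - N * c := by
    intro x
    have hy : σ (a * σ x + b * x + c) = ρ * (a * σ x + b * x + c) := hLS x
    have hw : A * σ (u * σ x + v * x) + B * (u * σ x + v * x) = N * (a * σ x + b * x) := by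
      rw [hA, hB, hN]
      simp only [map_add, map_mul, hσσ]
      ring
    rw [hf]
    dsimp only
    set y := a * σ x + b * x + c with hydef
    rw [add_assoc (y ^ r * _)]
    set w := u * σ x + v * x with hwdef
    have hxy : a * σ x + b * x = y - c := by rw [hydef]; ring
    rw [hxy] at hw
    have hys : y ^ r * σ (y ^ s) = y ^ r * y ^ s := by
      by_cases hy0 : y = 0
      · rw [hy0, zero_pow hr.ne', zero_mul, zero_mul]
      · rcases hS y (hLS x) hy0 with h | h <;> rw [h] <;> simp
    have hNy : N * y = N * y ^ r := by
      rcases hNr with h | h <;> rw [h] <;> ring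
    have hg : σ (y ^ r * (e₀ + e₁ * y ^ s)) = ρ ^ r * y ^ r * (σ e₀ + σ e₁ * y ^ s) := by
      rw [map_mul, map_pow, hy, map_add, map_mul, mul_pow]
      linear_combination ρ ^ r * σ e₁ * hys
    rw [map_add σ, hg, hP, hE]
    linear_combination hw + hNy
  constructor
  · intro hbij
    obtain ⟨x₀, hx₀⟩ := hne
    have hsurj : S.SurjOn (fun y => y ^ r * (P + E * y ^ s)) S := by
      intro z hz
      have hz' : σ (z - N * c) = ρ * (z - N * c) := by
        rw [map_sub, map_mul, hσN, hσc, show σ z = ρ * z from hz]; ring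
      obtain ⟨w, hw⟩ := exists_mul_map_add_mul_eq ⟨x₀, hx₀⟩ hσσ hA0' hρ0 hσA hσB hz'
      obtain ⟨x, rfl⟩ := hbij.2 w
      refine ⟨_, hLS x, ?_⟩
      rw [hrel] at hw
      exact sub_left_inj.1 hw
    have hA' : ∃ y ∈ S, y ≠ 0 := by
      by_contra! h
      have h1 := h _ (hLS 0)
      have h3 := h _ (hLS 1)
      have h4 := h _ (hLS x₀)
      rw [map_zero] at h1
      rw [map_one] at h3
      exact hx₀ (mul_left_cancel₀ ha0 (by linear_combination h4 - x₀ * h3 - (1 - x₀) * h1))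
    obtain ⟨y, hy, hy0⟩ := hA'
    have hyη : y * η ∈ S := by
      rw [hSdef, Set.mem_ofPred_eq, map_mul, hησ, show σ y = ρ * y from hy, mul_assoc]
    have hyηs : (y * η) ^ s = -y ^ s := by rw [mul_pow, hηs, mul_neg_one]
    refine sq_sub_sq_pow_eq_of_surjOn hr hs0 h2 hS ?_ ?_ hsurj
    · rcases hS y hy hy0 with h | h
      · exact ⟨y, hy, h⟩
      · exact ⟨y * η, hyη, by rw [hyηs, h, neg_neg]⟩
    · rcases hS y hy hy0 with h | h
      · exact ⟨y * η, hyη, by rw [hyηs, h]⟩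
      · exact ⟨y, hy, h⟩
  · intro hcond
    refine Finite.injective_iff_bijective.1 fun x z hxz => ?_
    have h3 := (hrel x).symm.trans ((congrArg (fun w => A * σ w + B * w) hxz).trans (hrel z))
    have hL := injOn_pow_mul_add_mul_pow hr hs0 hgcd h2 hS hPE hcond (hLS x) (hLS z)
      (sub_left_inj.1 h3)
    have hw : u * σ x + v * x = u * σ z + v * z := by
      rw [hf] at hxz
      dsimp only at hxz
      rw [hL] at hxz
      linear_combination hxz
    exact mul_left_cancel₀ hA0' (by rw [hA]; linear_combination u * hL - a * hw)
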